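/- Let d ≥ 1 and 0 < β < min{2, 4-d} (so that β > 0). Define ψ(ρ) = F(-β/2, -1; d/2; ρ) = 1 + (β/d)ρ for 0 ≤ ρ ≤ 1 and ψ(ρ) = (Γ(d/2)/(Γ(2-β/2)Γ((β+d)/2))) ρ^{β/2} F(-β/2, (2-β-d)/2; 2-β/2; ρ^{-1}) for ρ > 1. Then ψ is continuously differentiable on [0,∞), is concave on (1,∞), and satisfies ψ(ρ) ≤ ψ(1) + ψ'(1)(ρ - 1) for all ρ ≥ 1. -/

import Mathlib

open Real Set MeasureTheory

/-- Pochhammer symbol (rising factorial) for a real argument. -/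
noncomputable def poch (x : ℝ) (n : ℕ) : ℝ := ∏ i ∈ Finset.range n, (x + i)

/-- Gauss hypergeometric series. -/
noncomputable def hyperF (a b c z : ℝ) : ℝ :=
  ∑' n : ℕ, poch a n * poch b n / (poch c n * (n.factorial : ℝ)) * z ^ n

/-!
Put `p = 1 - β/2` and `q = (β + d)/2`. On `(1, ∞)` the function `ψ` is a positive multiple of
`ρ ^ (1 - p) * F(p - 1, 1 - q; p + 1; 1/ρ)`. Two of Gauss' contiguous relations reduce this
hypergeometric function to the binomial series `F(p, 1 - q; p; z) = (1 - z) ^ (q - 1)` and to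
`F(p, 1 - q; p + 1; z) = p * z ^ (-p) * B(z; p, q)`, where `B` is the incomplete beta function.
The resulting closed form extends continuously to `ρ = 1`, and its derivative is a multiple of
`(1 - p) * p * B(1/ρ; p, q)`, which decreases in `ρ` when `0 ≤ β`. The Gamma factors are exactly
such that value and slope at `ρ = 1` match those of `1 + (β/d) * ρ`, by the Beta integral.
-/

open Filter Topology
open ProbabilityTheory (beta)

section Hypergeometric

variable {c z : ℝ}

lemma poch_succ (x : ℝ) (n : ℕ) : poch x (n + 1) = poch x n * (x + n) :=
  Finset.prod_range_succ _ _

lemma mul_poch_add_one (x : ℝ) (n : ℕ) : x * poch (x + 1) n = poch x n * (x + n) := by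
  rw [← poch_succ, poch, poch, Finset.prod_range_succ', mul_comm]
  simp only [Nat.cast_add, Nat.cast_one, Nat.cast_zero, add_zero, add_assoc, add_comm (1 : ℝ)]

lemma poch_pos {x : ℝ} (hx : 0 < x) (n : ℕ) : 0 < poch x n :=
  Finset.prod_pos fun _ _ => by positivity

lemma poch_eq_smeval_ascPochhammer (x : ℝ) (n : ℕ) : poch x n = (ascPochhammer ℕ n).smeval x := by
  rw [← Polynomial.ascPochhammer_smeval_cast ℝ, ← Polynomial.eval_eq_smeval]
  induction n with
  | zero => simp [poch]
  | succ n ih => rw [poch_succ, ih, ascPochhammer_succ_eval]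

lemma ringChoose_eq_poch_div_factorial (b : ℝ) (n : ℕ) :
    Ring.choose (b + n - 1) n = poch b n / n.factorial := by
  rw [poch_eq_smeval_ascPochhammer, ← Ring.factorial_nsmul_multichoose_eq_ascPochhammer,
    Ring.choose, nsmul_eq_mul, mul_div_cancel_left₀ _ (by positivity)]
  ring_nf

/-- The `n`-th Taylor coefficient of `hyperF a b c`. -/
noncomputable def hyperCoeff (a b c : ℝ) (n : ℕ) : ℝ :=
  poch a n * poch b n / (poch c n * n.factorial)

lemma hyperCoeff_zero (a b c : ℝ) : hyperCoeff a b c 0 = 1 := by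
  simp [hyperCoeff, poch]

lemma hyperCoeff_succ (a b c : ℝ) (n : ℕ) :
    hyperCoeff a b c (n + 1) = (a + n) * (b + n) / ((c + n) * (n + 1)) * hyperCoeff a b c n := by
  simp only [hyperCoeff, poch_succ, Nat.factorial_succ, Nat.cast_mul, Nat.cast_succ,
    div_eq_mul_inv, mul_inv]
  ring_nf

lemma summable_hyperCoeff_mul_pow (a b c : ℝ) (hz : |z| < 1) :
    Summable fun n => hyperCoeff a b c n * z ^ n := by
  have hratio : Tendsto (fun n : ℕ =>
      |(a + n) / (c + n) * ((b + n) / (1 + n)) * z|) atTop (𝓝 |z|) := by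
    have hlin (x y : ℝ) := tendsto_add_mul_div_add_mul_atTop_nhds x y 1 one_ne_zero
    simpa only [one_mul, div_one] using (((hlin a c).mul (hlin b 1)).mul_const z).abs
  obtain ⟨r, hzr, hr⟩ := exists_between hz
  refine summable_of_ratio_norm_eventually_le hr ?_
  filter_upwards [hratio.eventually_le_const hzr] with n hn
  calc ‖hyperCoeff a b c (n + 1) * z ^ (n + 1)‖
      = |(a + n) / (c + n) * ((b + n) / (1 + n)) * z| * ‖hyperCoeff a b c n * z ^ n‖ := by
        rw [hyperCoeff_succ, mul_div_mul_comm, norm_eq_abs, norm_eq_abs, ← abs_mul]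
        ring_nf
    _ ≤ r * ‖hyperCoeff a b c n * z ^ n‖ := by gcongr

lemma hasSum_hyperF (a b c : ℝ) (hz : |z| < 1) :
    HasSum (fun n => hyperCoeff a b c n * z ^ n) (hyperF a b c z) :=
  (summable_hyperCoeff_mul_pow a b c hz).hasSum

lemma sub_mul_hyperF_add_one (a b : ℝ) (hc : 0 < c) (hz : |z| < 1) :
    (c - a) * hyperF a b (c + 1) z = c * hyperF a b c z - a * hyperF (a + 1) b (c + 1) z := by
  have hcoeff (n : ℕ) : (c - a) * hyperCoeff a b (c + 1) n =
      c * hyperCoeff a b c n - a * hyperCoeff (a + 1) b (c + 1) n := by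
    have ha := mul_poch_add_one a n
    have hc' := mul_poch_add_one c n
    have := poch_pos hc n
    have := poch_pos (add_pos hc one_pos) n
    simp only [hyperCoeff]
    field_simp
    linear_combination poch b n * (poch c n * ha - poch a n * hc')
  have hsum := ((hasSum_hyperF a b c hz).mul_left c).sub
    ((hasSum_hyperF (a + 1) b (c + 1) hz).mul_left a)
  exact ((hasSum_hyperF a b (c + 1) hz).mul_left (c - a)).unique
    (hsum.congr_fun fun n => by linear_combination z ^ n * hcoeff n)

lemma mul_hyperF_eq_mul_add_one_left (a b : ℝ) (hc : 0 < c) (hz : |z| < 1) :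
    c * hyperF a b c z =
      c * (1 - z) * hyperF (a + 1) b c z + (c - b) * z * hyperF (a + 1) b (c + 1) z := by
  have hcoeff (n : ℕ) : c * (hyperCoeff (a + 1) b c (n + 1) - hyperCoeff a b c (n + 1)) =
      c * hyperCoeff (a + 1) b c n - (c - b) * hyperCoeff (a + 1) b (c + 1) n := by
    have ha := mul_poch_add_one a n
    have hc' := mul_poch_add_one c n
    have := poch_pos hc n
    have := poch_pos (add_pos hc one_pos) n
    simp only [hyperCoeff, poch_succ, Nat.factorial_succ, Nat.cast_mul, Nat.cast_succ, ← ha]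
    field_simp
    linear_combination poch (a + 1) n * poch b n * (n + 1) * (b - c) * hc'
  have hdiff := ((hasSum_hyperF (a + 1) b c hz).sub (hasSum_hyperF a b c hz)).mul_left c
  rw [← hasSum_nat_add_iff' 1] at hdiff
  simp only [Finset.range_one, Finset.sum_singleton, hyperCoeff_zero, sub_self, mul_zero,
    sub_zero] at hdiff
  have hsum := (((hasSum_hyperF (a + 1) b c hz).mul_left c).sub
    ((hasSum_hyperF (a + 1) b (c + 1) hz).mul_left (c - b))).mul_left z
  have heq := hdiff.unique (hsum.congr_fun fun n => by linear_combination z ^ (n + 1) * hcoeff n)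
  linear_combination -heq

lemma hasSum_poch_div_factorial_mul_pow (b : ℝ) (hz : |z| < 1) :
    HasSum (fun n : ℕ => poch b n / n.factorial * z ^ n) ((1 - z) ^ (-b)) := by
  have h := (one_div_one_sub_rpow_hasFPowerSeriesOnBall_zero b).hasSum (y := z)
    (by simpa [enorm_eq_nnnorm, ← NNReal.coe_lt_coe] using hz)
  simpa only [zero_add, one_div, FormalMultilinearSeries.ofScalars_apply_eq, smul_eq_mul,
    ringChoose_eq_poch_div_factorial, ← rpow_neg (sub_pos.2 (abs_lt.1 hz).2).le] using h

lemma hyperF_self_right (b : ℝ) (hc : 0 < c) (hz : |z| < 1) :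
    hyperF c b c z = (1 - z) ^ (-b) := by
  refine (hasSum_hyperF c b c hz).unique ?_
  refine (hasSum_poch_div_factorial_mul_pow b hz).congr_fun fun n => ?_
  rw [hyperCoeff, mul_div_mul_left _ _ (poch_pos hc n).ne']

end Hypergeometric

section IncompleteBeta

variable {p q z : ℝ}

/-- The incomplete beta function `B(z; p, q)`. -/
noncomputable def incompleteBeta (p q z : ℝ) : ℝ :=
  ∫ t in (0 : ℝ)..z, t ^ (p - 1) * (1 - t) ^ (q - 1)

lemma integral_rpow_mul_pow (hp : 0 < p) (hz : 0 ≤ z) (n : ℕ) :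
    ∫ t in (0 : ℝ)..z, t ^ (p - 1) * t ^ n = z ^ (p + n) / (p + n) := by
  have hpn : 0 < p + n := by positivity
  calc ∫ t in (0 : ℝ)..z, t ^ (p - 1) * t ^ n = ∫ t in (0 : ℝ)..z, t ^ (p + n - 1) := by
        refine intervalIntegral.integral_congr_ae (.of_forall fun t ht => ?_)
        rw [uIoc_of_le hz] at ht
        simp only [← rpow_add_natCast ht.1.ne', sub_add_eq_add_sub]
    _ = z ^ (p + n) / (p + n) := by
        rw [integral_rpow (.inl (by linarith)), sub_add_cancel, zero_rpow hpn.ne', sub_zero]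

lemma hasSum_incompleteBeta (q : ℝ) (hp : 0 < p) (hz0 : 0 ≤ z) (hz : z < 1) :
    HasSum (fun n : ℕ => poch (1 - q) n / n.factorial * (z ^ (p + n) / (p + n)))
      (incompleteBeta p q z) := by
  simp only [← integral_rpow_mul_pow hp hz0, ← intervalIntegral.integral_const_mul]
  have habs {t : ℝ} (ht : t ∈ uIoc 0 z) : |t| < 1 := by
    rw [uIoc_of_le hz0] at ht
    exact (abs_of_pos ht.1).trans_lt (ht.2.trans_lt hz)
  have hsummable : Summable fun n : ℕ => |poch (1 - q) n / n.factorial| * z ^ n := by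
    simpa only [abs_mul, abs_pow, abs_of_nonneg hz0] using
      (hasSum_poch_div_factorial_mul_pow (1 - q) ((abs_of_nonneg hz0).trans_lt hz)).summable.abs
  refine intervalIntegral.hasSum_integral_of_dominated_convergence
    (fun n t => |poch (1 - q) n / n.factorial| * z ^ n * t ^ (p - 1)) (fun n => ?_)
    (fun n => .of_forall fun t ht => ?_) (.of_forall fun t _ => hsummable.mul_right _) ?_
    (.of_forall fun t ht => ?_)
  · exact Measurable.aestronglyMeasurable (by fun_prop)
  · rw [uIoc_of_le hz0] at ht
    have hpow : t ^ n ≤ z ^ n := pow_le_pow_left₀ ht.1.le ht.2 n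
    have hrpow : 0 ≤ t ^ (p - 1) := rpow_nonneg ht.1.le _
    rw [norm_eq_abs, abs_mul, abs_mul, abs_of_nonneg hrpow, abs_of_nonneg (pow_nonneg ht.1.le n),
      mul_comm (t ^ (p - 1)), ← mul_assoc]
    gcongr
  · simp_rw [tsum_mul_right]
    exact (intervalIntegral.intervalIntegrable_rpow' (by linarith)).const_mul _
  · have hbinom := (hasSum_poch_div_factorial_mul_pow (1 - q) (habs ht)).mul_left (t ^ (p - 1))
    rw [neg_sub] at hbinom
    exact hbinom.congr_fun fun n => by ring

lemma hyperF_eq_incompleteBeta (q : ℝ) (hp : 0 < p) (hz0 : 0 < z) (hz : z < 1) :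
    hyperF p (1 - q) (p + 1) z = p * z ^ (-p) * incompleteBeta p q z := by
  refine (hasSum_hyperF p (1 - q) (p + 1) ((abs_of_pos hz0).trans_lt hz)).unique ?_
  refine ((hasSum_incompleteBeta q hp hz0.le hz).mul_left (p * z ^ (-p))).congr_fun fun n => ?_
  have : 0 < p + n := by positivity
  have := poch_pos hp n
  have := poch_pos (add_pos hp one_pos) n
  have := rpow_pos_of_pos hz0 p
  rw [hyperCoeff, rpow_neg hz0.le, rpow_add_natCast hz0.ne']
  field_simp
  linear_combination -poch (1 - q) n * mul_poch_add_one p n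

lemma hyperF_sub_one_eq (q : ℝ) (hp : 0 < p) (hz0 : 0 < z) (hz : z < 1) :
    hyperF (p - 1) (1 - q) (p + 1) z =
      p * (1 - z) ^ q + (1 - p + (p + q - 1) * z) * (p * z ^ (-p) * incompleteBeta p q z) := by
  have hz' : |z| < 1 := (abs_of_pos hz0).trans_lt hz
  have hright := sub_mul_hyperF_add_one (p - 1) (1 - q) hp hz'
  have hleft := mul_hyperF_eq_mul_add_one_left (p - 1) (1 - q) hp hz'
  have hbinom : (1 - z) * hyperF p (1 - q) p z = (1 - z) ^ q := by
    rw [hyperF_self_right _ hp hz', neg_sub, mul_comm, ← rpow_add_one (sub_pos.2 hz).ne',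
      sub_add_cancel]
  rw [sub_add_cancel] at hright hleft
  rw [← hyperF_eq_incompleteBeta q hp hz0 hz]
  linear_combination hright + hleft + p * hbinom

lemma ofReal_beta_integrand {t : ℝ} (ht : t ∈ Icc 0 1) :
    ((t ^ (p - 1) * (1 - t) ^ (q - 1) : ℝ) : ℂ) =
      (t : ℂ) ^ ((p : ℂ) - 1) * (1 - (t : ℂ)) ^ ((q : ℂ) - 1) := by
  rw [Complex.ofReal_mul, Complex.ofReal_cpow ht.1, Complex.ofReal_cpow (sub_nonneg.2 ht.2)]
  push_cast
  rfl

lemma intervalIntegrable_beta_integrand (hp : 0 < p) (hq : 0 < q) :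
    IntervalIntegrable (fun t : ℝ => t ^ (p - 1) * (1 - t) ^ (q - 1)) volume 0 1 := by
  have h := Complex.betaIntegral_convergent (u := p) (v := q) (by simpa) (by simpa)
  rw [intervalIntegrable_iff, uIoc_of_le zero_le_one] at h ⊢
  refine IntegrableOn.congr_fun h.re (fun t ht => ?_) measurableSet_Ioc
  simp only [← ofReal_beta_integrand (Ioc_subset_Icc_self ht), RCLike.re_to_complex,
    Complex.ofReal_re]

lemma incompleteBeta_one (hp : 0 < p) (hq : 0 < q) : incompleteBeta p q 1 = beta p q := by
  have h : Complex.betaIntegral p q = incompleteBeta p q 1 := by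
    rw [Complex.betaIntegral, incompleteBeta, ← intervalIntegral.integral_ofReal]
    refine intervalIntegral.integral_congr fun t ht => ?_
    rw [uIcc_of_le zero_le_one] at ht
    exact (ofReal_beta_integrand ht).symm
  rw [ProbabilityTheory.beta_eq_betaIntegralReal p q hp hq, h, Complex.ofReal_re]

lemma continuousOn_incompleteBeta (hp : 0 < p) (hq : 0 < q) :
    ContinuousOn (incompleteBeta p q) (Icc 0 1) := by
  rw [← uIcc_of_le zero_le_one]
  exact intervalIntegral.continuousOn_primitive_interval'
    (intervalIntegrable_beta_integrand hp hq) left_mem_uIcc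

lemma monotoneOn_incompleteBeta (hp : 0 < p) (hq : 0 < q) :
    MonotoneOn (incompleteBeta p q) (Icc 0 1) := by
  intro x hx y hy hxy
  refine intervalIntegral.integral_mono_interval le_rfl hx.1 hxy ?_ ?_
  · refine (ae_restrict_iff' measurableSet_Ioc).2 (.of_forall fun t ht => ?_)
    exact mul_nonneg (rpow_nonneg ht.1.le _) (rpow_nonneg (sub_nonneg.2 (ht.2.trans hy.2)) _)
  · refine (intervalIntegrable_beta_integrand hp hq).mono_set ?_
    exact uIcc_subset_uIcc_left (by rwa [uIcc_of_le zero_le_one])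

lemma hasDerivAt_incompleteBeta (hp : 0 < p) (hq : 0 < q) (hz : z ∈ Ioo 0 1) :
    HasDerivAt (incompleteBeta p q) (z ^ (p - 1) * (1 - z) ^ (q - 1)) z := by
  refine intervalIntegral.integral_hasDerivAt_right ?_ ?_ ?_
  · refine (intervalIntegrable_beta_integrand hp hq).mono_set (uIcc_subset_uIcc_left ?_)
    rw [uIcc_of_le zero_le_one]
    exact Ioo_subset_Icc_self hz
  · exact (Measurable.stronglyMeasurable (by fun_prop)).stronglyMeasurableAtFilter
  · exact (continuousAt_rpow_const _ _ (.inl hz.1.ne')).mul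
      (ContinuousAt.rpow_const (by fun_prop) (.inl (sub_pos.2 hz.2).ne'))

lemma inv_mem_Icc_zero_one {r : ℝ} (hr : 1 ≤ r) : r⁻¹ ∈ Icc (0 : ℝ) 1 :=
  ⟨by positivity, inv_le_one_of_one_le₀ hr⟩

lemma continuousOn_incompleteBeta_inv (hp : 0 < p) (hq : 0 < q) :
    ContinuousOn (fun r => incompleteBeta p q r⁻¹) (Ici 1) :=
  (continuousOn_incompleteBeta hp hq).comp
    (continuousOn_inv₀.mono fun _ hr => (one_pos.trans_le hr).ne') fun _ => inv_mem_Icc_zero_one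

lemma antitoneOn_incompleteBeta_inv (hp : 0 < p) (hq : 0 < q) :
    AntitoneOn (fun r => incompleteBeta p q r⁻¹) (Ici 1) := fun _ hx _ hy hxy =>
  monotoneOn_incompleteBeta hp hq (inv_mem_Icc_zero_one hy) (inv_mem_Icc_zero_one hx)
    (inv_anti₀ (one_pos.trans_le hx) hxy)

end IncompleteBeta

section OuterProfile

variable {p q r : ℝ}

/-- Closed form of `r ^ (1 - p) * F(p - 1, 1 - q; p + 1; 1/r)` for `r > 1`, which unlike the
hypergeometric series is manifestly continuous up to `r = 1`. -/
noncomputable def outerProfile (p q r : ℝ) : ℝ :=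
  p * r ^ (1 - p) * (1 - r⁻¹) ^ q + ((1 - p) * r + (p + q - 1)) * (p * incompleteBeta p q r⁻¹)

lemma rpow_mul_hyperF_inv_eq_outerProfile (q : ℝ) (hp : 0 < p) (hr : 1 < r) :
    r ^ (1 - p) * hyperF (p - 1) (1 - q) (p + 1) r⁻¹ = outerProfile p q r := by
  have hr0 : 0 < r := one_pos.trans hr
  have : 0 < r ^ p := rpow_pos_of_pos hr0 p
  rw [hyperF_sub_one_eq q hp (inv_pos.2 hr0) (inv_lt_one_of_one_lt₀ hr), outerProfile,
    rpow_neg (inv_pos.2 hr0).le, inv_rpow hr0.le, inv_inv, rpow_sub hr0, rpow_one]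
  field_simp

lemma outerProfile_one (hp : 0 < p) (hq : 0 < q) :
    outerProfile p q 1 = q * (p * beta p q) := by
  rw [outerProfile, inv_one, incompleteBeta_one hp hq, sub_self, zero_rpow hq.ne']
  ring

lemma continuousOn_outerProfile (hp : 0 < p) (hq : 0 < q) :
    ContinuousOn (outerProfile p q) (Ici 1) := by
  have hne : ∀ x ∈ Ici (1 : ℝ), x ≠ 0 := fun x hx => (one_pos.trans_le hx).ne'
  have hpow : ContinuousOn (fun x : ℝ => x ^ (1 - p)) (Ici 1) :=
    continuousOn_id.rpow_const fun x hx => .inl (hne x hx)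
  have hone_sub : ContinuousOn (fun x : ℝ => (1 - x⁻¹) ^ q) (Ici 1) :=
    (continuousOn_const.sub (continuousOn_inv₀.mono hne)).rpow_const fun _ _ => .inr hq.le
  have hbeta := continuousOn_incompleteBeta_inv hp hq
  unfold outerProfile
  fun_prop

/- The derivatives of the algebraic factors cancel against that of the incomplete beta function;
only the coefficient `1 - p` of `r` survives. -/
lemma hasDerivAt_outerProfile (hp : 0 < p) (hq : 0 < q) (hr : 1 < r) :
    HasDerivAt (outerProfile p q) ((1 - p) * (p * incompleteBeta p q r⁻¹)) r := by
  have hr0 : 0 < r := one_pos.trans hr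
  have hinv : r⁻¹ ∈ Ioo (0 : ℝ) 1 := ⟨inv_pos.2 hr0, inv_lt_one_of_one_lt₀ hr⟩
  have hsub : 0 < 1 - r⁻¹ := sub_pos.2 hinv.2
  have hbeta := (hasDerivAt_incompleteBeta hp hq hinv).comp r (hasDerivAt_inv hr0.ne')
  have hpow := (hasDerivAt_rpow_const (p := 1 - p) (.inl hr0.ne')).const_mul p
  have hone_sub := ((hasDerivAt_inv hr0.ne').const_sub 1).rpow_const (p := q) (.inl hsub.ne')
  have hlin := ((hasDerivAt_id r).const_mul (1 - p)).add_const (p + q - 1)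
  refine ((hpow.mul hone_sub).add (hlin.mul (hbeta.const_mul p))).congr_deriv ?_
  have : 0 < r ^ p := rpow_pos_of_pos hr0 p
  have hq' : (1 - r⁻¹) ^ q = (1 - r⁻¹) ^ (q - 1) * (1 - r⁻¹) := by
    rw [← rpow_add_one hsub.ne', sub_add_cancel]
  simp only [Function.comp, id, hq', inv_rpow hr0.le, rpow_sub hr0, rpow_one]
  generalize (1 - r⁻¹) ^ (q - 1) = w
  field_simp
  ring

end OuterProfile

lemma le_add_deriv_mul_sub_of_concaveOn {f : ℝ → ℝ} {s : Set ℝ} {x y : ℝ}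
    (hf : ConcaveOn ℝ s f) (hx : x ∈ s) (hy : y ∈ s) (hxy : x ≤ y)
    (hfx : DifferentiableAt ℝ f x) : f y ≤ f x + deriv f x * (y - x) := by
  rcases hxy.eq_or_lt with rfl | hlt
  · simp
  · have hslope := hf.slope_le_deriv hx hy hlt hfx
    rw [slope_def_field, div_le_iff₀ (sub_pos.2 hlt)] at hslope
    linarith

section Psi

variable {d β ρ : ℝ}

/-- The normalizing constant of `ψ` on `(1, ∞)`. -/
noncomputable def psiConst (d β : ℝ) : ℝ :=
  Gamma (d / 2) / (Gamma (2 - β / 2) * Gamma ((β + d) / 2))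

/-- The function `ψ`, for a real dimension `d`. The affine branch is used on all of `(-∞, 1]`
rather than only on `[0, 1]`, so that regularity can be stated on the whole line. -/
noncomputable def psi (d β ρ : ℝ) : ℝ :=
  if ρ ≤ 1 then 1 + β / d * ρ
  else psiConst d β * ρ ^ (β / 2) * hyperF (-β / 2) ((2 - β - d) / 2) (2 - β / 2) ρ⁻¹

/-- The derivative of `psi d β`; the truncation `max ρ 1` makes it constant on `(-∞, 1]`. -/
noncomputable def psiDeriv (d β ρ : ℝ) : ℝ :=
  psiConst d β *
    (β / 2 * ((1 - β / 2) * incompleteBeta (1 - β / 2) ((β + d) / 2) (max ρ 1)⁻¹))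

lemma psi_of_le_one (hρ : ρ ≤ 1) : psi d β ρ = 1 + β / d * ρ :=
  if_pos hρ

lemma psi_of_one_lt (hρ : 1 < ρ) : psi d β ρ =
    psiConst d β * ρ ^ (β / 2) * hyperF (-β / 2) ((2 - β - d) / 2) (2 - β / 2) ρ⁻¹ :=
  if_neg hρ.not_ge

lemma psiConst_nonneg (hd : 0 < d) (hdβ : -d < β) (hβ : β < 2) : 0 ≤ psiConst d β :=
  div_nonneg (Gamma_nonneg_of_nonneg (by linarith)) <|
    mul_nonneg (Gamma_nonneg_of_nonneg (by linarith)) (Gamma_nonneg_of_nonneg (by linarith))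

lemma psiConst_mul_beta (hd : 0 < d) (hdβ : -d < β) (hβ : β < 2) :
    psiConst d β * ((1 - β / 2) * beta (1 - β / 2) ((β + d) / 2)) = 2 / d := by
  have hp : 0 < 1 - β / 2 := by linarith
  have := Gamma_pos_of_pos (half_pos hd)
  have := Gamma_pos_of_pos hp
  have := Gamma_pos_of_pos (show 0 < (β + d) / 2 by linarith)
  rw [psiConst, beta, show 2 - β / 2 = 1 - β / 2 + 1 by ring, Gamma_add_one hp.ne',
    show 1 - β / 2 + (β + d) / 2 = d / 2 + 1 by ring, Gamma_add_one (half_pos hd).ne']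
  generalize 1 - β / 2 = p at *
  field_simp

lemma psi_eq_outerProfile (hd : 0 < d) (hdβ : -d < β) (hβ : β < 2) (hρ : 1 ≤ ρ) :
    psi d β ρ = psiConst d β * outerProfile (1 - β / 2) ((β + d) / 2) ρ := by
  have hp : 0 < 1 - β / 2 := by linarith
  rcases hρ.eq_or_lt with rfl | hρ
  · rw [psi_of_le_one le_rfl, outerProfile_one hp (by linarith), mul_left_comm,
      psiConst_mul_beta hd hdβ hβ]
    field_simp
    ring
  · rw [psi_of_one_lt hρ, ← rpow_mul_hyperF_inv_eq_outerProfile _ hp hρ]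
    ring_nf

lemma psiDeriv_of_le_one (hd : 0 < d) (hdβ : -d < β) (hβ : β < 2) (hρ : ρ ≤ 1) :
    psiDeriv d β ρ = β / d := by
  rw [psiDeriv, max_eq_right hρ, inv_one, incompleteBeta_one (by linarith) (by linarith),
    mul_left_comm, psiConst_mul_beta hd hdβ hβ]
  ring

lemma continuous_psiDeriv (hdβ : -d < β) (hβ : β < 2) : Continuous (psiDeriv d β) := by
  have h := (continuousOn_incompleteBeta_inv (show 0 < 1 - β / 2 by linarith)
    (show 0 < (β + d) / 2 by linarith)).comp_continuous (f := fun ρ : ℝ => max ρ 1) (by fun_prop)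
    fun ρ => le_max_right ρ 1
  unfold psiDeriv
  fun_prop

lemma antitone_psiDeriv (hd : 0 < d) (hβ0 : 0 ≤ β) (hβ : β < 2) : Antitone (psiDeriv d β) := by
  intro x y hxy
  have hp : 0 < 1 - β / 2 := by linarith
  have hK := psiConst_nonneg hd (by linarith) hβ
  have hbeta := antitoneOn_incompleteBeta_inv hp (show 0 < (β + d) / 2 by linarith)
    (le_max_right x 1) (le_max_right y 1) (max_le_max_right 1 hxy)
  unfold psiDeriv
  gcongr

lemma continuousAt_psi_one (hd : 0 < d) (hdβ : -d < β) (hβ : β < 2) :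
    ContinuousAt (psi d β) 1 := by
  refine continuousAt_iff_continuous_left_right.2 ⟨?_, ?_⟩
  · have haffine : ContinuousWithinAt (fun ρ => 1 + β / d * ρ) (Iic 1) 1 := by fun_prop
    exact haffine.congr (fun _ => psi_of_le_one) (psi_of_le_one le_rfl)
  · have houter := continuousOn_outerProfile (show 0 < 1 - β / 2 by linarith)
      (show 0 < (β + d) / 2 by linarith) 1 self_mem_Ici
    exact (houter.const_mul (psiConst d β)).congr (fun _ => psi_eq_outerProfile hd hdβ hβ)
      (psi_eq_outerProfile hd hdβ hβ le_rfl)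

lemma hasDerivAt_psi (hd : 0 < d) (hdβ : -d < β) (hβ : β < 2) (ρ : ℝ) :
    HasDerivAt (psi d β) (psiDeriv d β ρ) ρ := by
  refine hasDerivAt_of_hasDerivAt_of_ne' (x := 1) (fun y hy => ?_)
    (continuousAt_psi_one hd hdβ hβ) (continuous_psiDeriv hdβ hβ).continuousAt ρ
  rcases hy.lt_or_gt with hlt | hgt
  · rw [psiDeriv_of_le_one hd hdβ hβ hlt.le]
    refine HasDerivAt.congr_of_eventuallyEq ?_
      ((eventually_le_nhds hlt).mono fun _ => psi_of_le_one)
    simpa using ((hasDerivAt_id y).const_mul (β / d)).const_add 1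
  · have h := (hasDerivAt_outerProfile (show 0 < 1 - β / 2 by linarith)
      (show 0 < (β + d) / 2 by linarith) hgt).const_mul (psiConst d β)
    rw [sub_sub_cancel] at h
    rw [psiDeriv, max_eq_left hgt.le]
    exact h.congr_of_eventuallyEq
      ((eventually_ge_nhds hgt).mono fun _ => psi_eq_outerProfile hd hdβ hβ)

lemma deriv_psi (hd : 0 < d) (hdβ : -d < β) (hβ : β < 2) : deriv (psi d β) = psiDeriv d β :=
  funext fun ρ => (hasDerivAt_psi hd hdβ hβ ρ).deriv

lemma differentiable_psi (hd : 0 < d) (hdβ : -d < β) (hβ : β < 2) : Differentiable ℝ (psi d β) :=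
  fun ρ => (hasDerivAt_psi hd hdβ hβ ρ).differentiableAt

lemma contDiff_psi (hd : 0 < d) (hdβ : -d < β) (hβ : β < 2) : ContDiff ℝ 1 (psi d β) :=
  contDiff_one_iff_deriv.2
    ⟨differentiable_psi hd hdβ hβ, deriv_psi hd hdβ hβ ▸ continuous_psiDeriv hdβ hβ⟩

lemma concaveOn_psi (hd : 0 < d) (hβ0 : 0 ≤ β) (hβ : β < 2) : ConcaveOn ℝ univ (psi d β) :=
  have hdβ : -d < β := by linarith
  Antitone.concaveOn_univ_of_deriv (differentiable_psi hd hdβ hβ)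
    (deriv_psi hd hdβ hβ ▸ antitone_psiDeriv hd hβ0 hβ)

end Psi

theorem psi_concave_alpha_two_general {d β : ℝ} (hd : 0 < d) (hβ0 : 0 ≤ β) (hβ : β < 2) :
    ∃ ψ : ℝ → ℝ,
      (∀ ρ ∈ Icc (0 : ℝ) 1, ψ ρ = 1 + β / d * ρ) ∧
      (∀ ρ : ℝ, 1 < ρ →
        ψ ρ = Gamma (d / 2) / (Gamma (2 - β / 2) * Gamma ((β + d) / 2)) *
          ρ ^ (β / 2) * hyperF (-β / 2) ((2 - β - d) / 2) (2 - β / 2) ρ⁻¹) ∧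
      ContDiffOn ℝ 1 ψ (Ici 0) ∧
      ConcaveOn ℝ (Ici (0 : ℝ)) ψ ∧
      (∀ ρ : ℝ, 1 ≤ ρ → ψ ρ ≤ ψ 1 + deriv ψ 1 * (ρ - 1)) := by
  have hdβ : -d < β := by linarith
  have hconcave := concaveOn_psi hd hβ0 hβ
  exact ⟨psi d β, fun ρ hρ => psi_of_le_one hρ.2, fun ρ => psi_of_one_lt,
    (contDiff_psi hd hdβ hβ).contDiffOn, hconcave.subset (subset_univ _) (convex_Ici 0),
    fun ρ hρ => le_add_deriv_mul_sub_of_concaveOn hconcave (mem_univ 1) (mem_univ ρ) hρ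
      (differentiable_psi hd hdβ hβ 1)⟩

theorem psi_concave_alpha_two (d : ℕ) (hd : 1 ≤ d) (β : ℝ) (hβ0 : 0 < β)
    (hβu : β < min 2 (4 - (d : ℝ))) :
    ∃ ψ : ℝ → ℝ,
      (∀ ρ ∈ Set.Icc (0 : ℝ) 1, ψ ρ = 1 + β / (d : ℝ) * ρ) ∧
      (∀ ρ : ℝ, 1 < ρ →
        ψ ρ = Real.Gamma ((d : ℝ) / 2) / (Real.Gamma (2 - β / 2) * Real.Gamma ((β + (d : ℝ)) / 2)) *
          ρ ^ (β / 2) * hyperF (-β / 2) ((2 - β - (d : ℝ)) / 2) (2 - β / 2) ρ⁻¹) ∧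
      ContDiffOn ℝ 1 ψ (Set.Ici 0) ∧
      ConcaveOn ℝ (Set.Ioi (1 : ℝ)) ψ ∧
      (∀ ρ : ℝ, 1 ≤ ρ → ψ ρ ≤ ψ 1 + deriv ψ 1 * (ρ - 1)) := by
  obtain ⟨ψ, hinner, houter, hC1, hconcave, htangent⟩ := psi_concave_alpha_two_general
    (show 0 < (d : ℝ) by exact_mod_cast hd) hβ0.le (lt_min_iff.1 hβu).1
  exact ⟨ψ, hinner, houter, hC1, hconcave.subset (Ioi_subset_Ici zero_le_one) (convex_Ioi 1),
    htangent⟩
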